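/- Let Ω, U, λ, u be as in the setting, and let γ : [0,∞) → ℝ² be differentiable with γ′(t) = −∇u(γ(t)) and γ(t) ∈ closure(Ω) for all t ≥ 0. Then there exists z* ∈ closure(Ω) with ∇u(z*) = 0 such that γ(t) → z* as t → +∞, and γ has finite length: the integral ∫₀^∞ ‖∇u(γ(t))‖ dt is finite. -/

import Mathlib

open Metric Set Filter Topology MeasureTheory

noncomputable section

abbrev E2 := EuclideanSpace ℝ (Fin 2)

/-- The Laplacian of `u`: the sum of the two pure second partial derivatives. -/
def lap (u : E2 → ℝ) (z : E2) : ℝ :=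
  ∑ i : Fin 2, iteratedFDeriv ℝ 2 u z (fun _ => EuclideanSpace.single i 1)

/-!
Along the trajectory `u` decreases, so `γ` accumulates at some `z ∈ closure Ω`, and it is enough to
have a Łojasiewicz inequality `|u y - u z| ^ θ ≤ C ‖∇u y‖` near `z` with `θ < 1`. Composing
`u - u z` with a suitable power then gives a function whose decrease along `γ` dominates the length
of `γ`, so that `γ` cannot leave a small ball around `z` once it has come close enough.

Two-dimensionality makes the Łojasiewicz inequality elementary. It is immediate where `∇u z ≠ 0`. If
`Δu z ≠ 0`, the Hessian at `z` has corank at most one, and a Lyapunov–Schmidt reduction replaces `u`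
by an analytic function of one variable. If `z` is critical and `Δu z = 0`, then `Δu` is controlled
by `u - u z`, so the leading homogeneous Taylor polynomial of `u - u z` is harmonic; a nonzero
homogeneous harmonic polynomial in the plane has no critical point besides the origin.
-/

section

open Asymptotics InnerProductSpace
open scoped Laplacian ContDiff

lemma isBigO_norm_pow_norm_pow {E : Type*} [NormedAddCommGroup E] {m n : ℕ} (h : m ≤ n) :
    (fun y : E => ‖y‖ ^ n) =O[𝓝 0] fun y => ‖y‖ ^ m := by
  rcases h.eq_or_lt with rfl | h
  · exact isBigO_refl _ _
  · exact (isLittleO_norm_pow_norm_pow h).isBigO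

section LeadingPart

variable {𝕜 E F : Type*} [NontriviallyNormedField 𝕜] [NormedAddCommGroup E] [NormedSpace 𝕜 E]
  [NormedAddCommGroup F] [NormedSpace 𝕜 F] {f : E → F} {x : E}

lemma analyticAt_apply_diag {n : ℕ} (q : E [×n]→L[𝕜] F) (y : E) :
    AnalyticAt 𝕜 (fun y => q fun _ => y) y :=
  q.analyticAt.comp (.pi fun _ => analyticAt_id)

lemma isBigO_pow_apply_diag {n : ℕ} (q : E [×n]→L[𝕜] F) :
    (fun y => q fun _ => y) =O[𝓝 0] fun y => ‖y‖ ^ n :=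
  .of_bound ‖q‖ (.of_forall fun y => by simpa using q.le_opNorm fun _ => y)

lemma apply_diag_smul {n : ℕ} (q : E [×n]→L[𝕜] F) (t : 𝕜) (y : E) :
    (q fun _ => t • y) = t ^ n • q fun _ => y := by
  simp [q.map_smul_univ]

lemma partialSum_succ_of_forall_lt_apply_eq_zero {p : FormalMultilinearSeries 𝕜 E F} {n : ℕ}
    (hp : ∀ k < n, ∀ y, p k (fun _ => y) = 0) (y : E) :
    p.partialSum (n + 1) y = p n fun _ => y := by
  rw [FormalMultilinearSeries.partialSum, Finset.sum_range_succ,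
    Finset.sum_eq_zero fun k hk => hp k (Finset.mem_range.1 hk) y, zero_add]

lemma apply_eq_zero_of_isBigO_pow {p : FormalMultilinearSeries 𝕜 E F}
    (hp : HasFPowerSeriesAt f p x) {n : ℕ} (hf : (fun y => f (x + y)) =O[𝓝 0] fun y => ‖y‖ ^ n) :
    ∀ k < n, ∀ y, p k (fun _ => y) = 0 := by
  intro k
  induction k using Nat.strong_induction_on with
  | _ k ih =>
    intro hk
    have hlead : (fun y => p k fun _ => y) =O[𝓝 0] fun y => ‖y‖ ^ (k + 1) := by
      simpa only [partialSum_succ_of_forall_lt_apply_eq_zero fun j hj => ih j hj (hj.trans hk),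
        sub_sub_cancel] using
        (hf.trans (isBigO_norm_pow_norm_pow hk)).sub (hp.isBigO_sub_partialSum_pow (k + 1))
    exact hlead.continuousMultilinearMap_apply_eq_zero

lemma exists_hasFPowerSeriesAt_of_isBigO_pow (hf : AnalyticAt 𝕜 f x) {n : ℕ}
    (hn : (fun y => f (x + y)) =O[𝓝 0] fun y => ‖y‖ ^ n) :
    ∃ p : FormalMultilinearSeries 𝕜 E F, HasFPowerSeriesAt f p x ∧ ∀ k < n, p k = 0 := by
  obtain ⟨p, hp⟩ := hf
  have hz := apply_eq_zero_of_isBigO_pow hp hn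
  obtain ⟨r, hr⟩ := hp
  refine ⟨fun k => if k < n then 0 else p k, ⟨r, ?_, hr.r_pos, fun {y} hy => ?_⟩,
    fun k hk => if_pos hk⟩
  · refine hr.r_le.trans (FormalMultilinearSeries.radius_le_of_le fun k => ?_)
    split_ifs <;> simp
  · convert! hr.hasSum hy using 2 with k
    split_ifs with hk
    · simp [hz k hk]
    · rfl

lemma isBigO_pow_fderiv [CompleteSpace F] (hf : AnalyticAt 𝕜 f x) {n : ℕ}
    (hn : (fun y => f (x + y)) =O[𝓝 0] fun y => ‖y‖ ^ (n + 1)) :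
    (fun y => fderiv 𝕜 f (x + y)) =O[𝓝 0] fun y => ‖y‖ ^ n := by
  obtain ⟨p, ⟨r, hr⟩, hp⟩ := exists_hasFPowerSeriesAt_of_isBigO_pow hf hn
  have hsum (y : E) : p.derivSeries.partialSum n y = 0 := Finset.sum_eq_zero fun k hk => by
    rw [p.derivSeries_eq_zero (hp _ (Nat.succ_lt_succ (Finset.mem_range.1 hk)))]
    rfl
  simpa only [hsum, sub_zero] using hr.fderiv.hasFPowerSeriesAt.isBigO_sub_partialSum_pow n

lemma exists_leading_part (hf : AnalyticAt 𝕜 f x) (hne : ¬∀ᶠ y in 𝓝 x, f y = 0) {k : ℕ}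
    (hk : (fun y => f (x + y)) =O[𝓝 0] fun y => ‖y‖ ^ k) :
    ∃ (n : ℕ) (q : E [×(n + k)]→L[𝕜] F), (∃ y, q (fun _ => y) ≠ 0) ∧
      (fun y => f (x + y) - q fun _ => y) =O[𝓝 0] fun y => ‖y‖ ^ (n + k + 1) := by
  classical
  obtain ⟨p, hp⟩ := hf
  have hex : ∃ d y, p d (fun _ => y) ≠ 0 := by
    contrapose! hne
    obtain ⟨r, hr⟩ := hp
    filter_upwards [hr.eventually_hasSum_sub] with y hy
    exact hy.unique (by simp only [hne]; exact hasSum_zero)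
  have hlt : ∀ d < Nat.find hex, ∀ y, p d (fun _ => y) = 0 := by
    simpa using fun d hd => Nat.find_min hex (m := d) hd
  have hle : k ≤ Nat.find hex := by
    obtain ⟨y, hy⟩ := Nat.find_spec hex
    by_contra! hlt
    exact hy (apply_eq_zero_of_isBigO_pow hp hk _ hlt y)
  obtain ⟨n, hn⟩ := Nat.exists_eq_add_of_le' hle
  rw [hn] at hlt
  refine ⟨n, p (n + k), hn ▸ Nat.find_spec hex, ?_⟩
  simpa only [partialSum_succ_of_forall_lt_apply_eq_zero hlt] using
    hp.isBigO_sub_partialSum_pow (n + k + 1)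

end LeadingPart

section Homogeneous

variable {E F : Type*} [NormedAddCommGroup E] [NormedSpace ℝ E] [NormedAddCommGroup F]
  [NormedSpace ℝ F]

lemma fderiv_smul_of_homogeneous {P : E → F} (hP : ContDiff ℝ 1 P) {n : ℕ}
    (h : ∀ (t : ℝ) y, P (t • y) = t ^ (n + 1) • P y) (t : ℝ) (y : E) :
    fderiv ℝ P (t • y) = t ^ n • fderiv ℝ P y := by
  have := hP.continuous_fderiv one_ne_zero
  refine congrFun (Continuous.ext_on (f := fun s : ℝ => fderiv ℝ P (s • y))
    (g := fun s : ℝ => s ^ n • fderiv ℝ P y) (dense_compl_singleton (0 : ℝ)) (by fun_prop)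
    (by fun_prop) fun s (hs : s ≠ 0) => ?_) t
  have hchain : s • fderiv ℝ P (s • y) = s • s ^ n • fderiv ℝ P y := by
    rw [← fderiv_comp_smul, funext (h s),
      fderiv_fun_const_smul (hP.differentiable one_ne_zero y), smul_smul, pow_succ']
  exact smul_right_injective _ hs hchain

lemma exists_pos_forall_mul_norm_pow_le_of_homogeneous [ProperSpace E] [Nontrivial E] {Q : E → F}
    (hQ : Continuous Q) {n : ℕ} (h : ∀ (t : ℝ) y, Q (t • y) = t ^ n • Q y)
    (hne : ∀ y, y ≠ 0 → Q y ≠ 0) : ∃ c > 0, ∀ y, c * ‖y‖ ^ n ≤ ‖Q y‖ := by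
  obtain ⟨e, he, hmin⟩ := (isCompact_sphere (0 : E) 1).exists_isMinOn
    (NormedSpace.sphere_nonempty.2 zero_le_one) hQ.norm.continuousOn
  refine ⟨‖Q e‖, norm_pos_iff.2 (hne e (ne_of_mem_sphere he one_ne_zero)), fun y => ?_⟩
  obtain ⟨v, hv, hy⟩ : ∃ v ∈ sphere (0 : E) 1, y = ‖y‖ • v := by
    rcases eq_or_ne y 0 with rfl | hy
    · exact ⟨e, he, by simp⟩
    · exact ⟨‖y‖⁻¹ • y, by simp [norm_smul, hy], by simp [smul_smul, hy]⟩
  calc ‖Q e‖ * ‖y‖ ^ n ≤ ‖Q v‖ * ‖y‖ ^ n := by gcongr; exact hmin hv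
    _ = ‖Q (‖y‖ • v)‖ := by rw [h, norm_smul, norm_pow, norm_norm, mul_comm]
    _ = ‖Q y‖ := by rw [← hy]

lemma eq_zero_of_homogeneous_of_isBigO {Q : E → F} {a b m : ℕ}
    (h : ∀ (t : ℝ) y, t ^ a • Q (t • y) = t ^ b • Q y) (hQ : Q =O[𝓝 0] fun y => ‖y‖ ^ m)
    (hb : b < a + m) (y : E) : Q y = 0 := by
  have hray : Tendsto (fun t : ℝ => t • y) (𝓝 0) (𝓝 0) :=
    (continuous_id.smul continuous_const).tendsto' _ _ (zero_smul ℝ y)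
  have hO : (fun t : ℝ => t ^ a • Q (t • y)) =O[𝓝 0] fun t => t ^ (a + m) := by
    have hpow : (fun t : ℝ => ‖t • y‖ ^ m) =O[𝓝 0] fun t => t ^ m := by
      simp only [norm_smul, mul_pow, mul_comm _ (‖y‖ ^ m)]
      exact ((isBigO_refl _ _).norm_left.pow m).const_mul_left _
    simpa only [pow_add] using! (isBigO_refl (fun t : ℝ => t ^ a) (𝓝 0)).smul
      ((hQ.comp_tendsto hray).trans hpow)
  have ho : (fun t : ℝ => t ^ b • Q y) =o[𝓝 0] fun t => t ^ b := by
    simpa only [h] using hO.trans_isLittleO (isLittleO_pow_pow hb)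
  by_contra hy
  have hpos : 0 < ‖Q y‖ := norm_pos_iff.2 hy
  have hball : ∀ᶠ t : ℝ in 𝓝[≠] 0, ‖t ^ b • Q y‖ ≤ ‖Q y‖ / 2 * ‖t ^ b‖ :=
    (ho.def (half_pos hpos)).filter_mono nhdsWithin_le_nhds
  obtain ⟨t, ht, ht0⟩ := (hball.and self_mem_nhdsWithin).exists
  have htb : 0 < ‖t ^ b‖ := norm_pos_iff.2 (pow_ne_zero b ht0)
  rw [norm_smul] at ht
  nlinarith

end Homogeneous

section Laplacian

variable {E F : Type*} [NormedAddCommGroup E] [InnerProductSpace ℝ E] [FiniteDimensional ℝ E]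
  [NormedAddCommGroup F] [NormedSpace ℝ F]

lemma isBigO_pow_laplacian [CompleteSpace F] {f : E → F} {x : E} (hf : AnalyticAt ℝ f x) {n : ℕ}
    (hn : (fun y => f (x + y)) =O[𝓝 0] fun y => ‖y‖ ^ (n + 2)) :
    (fun y => Δ f (x + y)) =O[𝓝 0] fun y => ‖y‖ ^ n := by
  have hD2 := isBigO_pow_fderiv hf.fderiv (isBigO_pow_fderiv hf hn)
  rw [laplacian_eq_iteratedFDeriv_stdOrthonormalBasis]
  have hcomp (i) : (fun y => iteratedFDeriv ℝ 2 f (x + y)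
      ![stdOrthonormalBasis ℝ E i, stdOrthonormalBasis ℝ E i]) =O[𝓝 0] fun y => ‖y‖ ^ n := by
    refine IsBigO.trans (.of_bound 1 (.of_forall fun y => ?_)) hD2
    simpa [iteratedFDeriv_two_apply] using (fderiv ℝ (fderiv ℝ f) (x + y)).le_opNorm₂
      (stdOrthonormalBasis ℝ E i) (stdOrthonormalBasis ℝ E i)
  exact IsBigO.fun_sum fun i _ => hcomp i

lemma laplacian_smul_of_homogeneous {P : E → F} (hP : ContDiff ℝ 2 P) {n : ℕ}
    (h : ∀ (t : ℝ) y, P (t • y) = t ^ n • P y) (t : ℝ) (y : E) :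
    t ^ 2 • Δ P (t • y) = t ^ n • Δ P y := by
  simp only [laplacian_eq_iteratedFDeriv_stdOrthonormalBasis, Finset.smul_sum]
  refine Finset.sum_congr rfl fun i _ => ?_
  have hD2 := congrFun (iteratedFDeriv_comp_const_smul (i := 2) t hP) y
  rw [funext (h t), iteratedFDeriv_const_smul_apply' hP.contDiffAt] at hD2
  exact (DFunLike.congr_fun hD2 _).symm

lemma laplacian_leading_part_eq_zero [CompleteSpace F] {f : E → F} (hf : AnalyticAt ℝ f 0)
    {n : ℕ} (q : E [×(n + 2)]→L[ℝ] F)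
    (hlead : (fun y => f y - q fun _ => y) =O[𝓝 0] fun y => ‖y‖ ^ (n + 3))
    (hΔ : Δ f =O[𝓝 0] fun y => ‖y‖ ^ (n + 1)) (y : E) : Δ (fun y => q fun _ => y) y = 0 := by
  set P : E → F := fun y => q fun _ => y
  have hP (y : E) : AnalyticAt ℝ P y := analyticAt_apply_diag q y
  have hPc : ContDiff ℝ 2 P := contDiff_iff_contDiffAt.2 fun y => (hP y).contDiffAt
  have hrem : Δ (f - P) =O[𝓝 0] fun y => ‖y‖ ^ (n + 1) := by
    simpa using! isBigO_pow_laplacian (x := 0) (hf.sub (hP 0))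
      (n := n + 1) (by simpa using! hlead)
  have hΔP : Δ P =O[𝓝 0] fun y => ‖y‖ ^ (n + 1) := by
    refine (hΔ.sub hrem).congr' ?_ .rfl
    filter_upwards [hf.contDiffAt.laplacian_sub_nhds hPc.contDiffAt] with y hy
    rw [hy, Pi.sub_apply, sub_sub_cancel]
  exact eq_zero_of_homogeneous_of_isBigO (laplacian_smul_of_homogeneous hPc (apply_diag_smul q))
    hΔP (by lia) y

lemma laplacian_comp_add_isometry {E' : Type*} [NormedAddCommGroup E'] [InnerProductSpace ℝ E']
    [FiniteDimensional ℝ E'] (e : E' ≃ₗᵢ[ℝ] E) (f : E → F) (x : E) :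
    Δ (fun y => f (x + e y)) = fun y => Δ f (x + e y) := by
  ext y
  rw [laplacian_eq_iteratedFDeriv_orthonormalBasis _ (stdOrthonormalBasis ℝ E'),
    laplacian_eq_iteratedFDeriv_orthonormalBasis _ ((stdOrthonormalBasis ℝ E').map e)]
  refine Finset.sum_congr rfl fun i _ => ?_
  have hcomp := e.toContinuousLinearEquiv.iteratedFDerivWithin_comp_right
    (fun w => f (x + w)) uniqueDiffOn_univ (mem_univ (e y)) 2
  simp only [preimage_univ, iteratedFDerivWithin_univ, iteratedFDeriv_comp_add_left] at hcomp
  refine (DFunLike.congr_fun hcomp _).trans ?_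
  rw [ContinuousMultilinearMap.compContinuousLinearMap_apply]
  congr 1 with j
  fin_cases j <;> simp

end Laplacian

section Lojasiewicz

variable {E : Type*} [NormedAddCommGroup E] [NormedSpace ℝ E] {u : E → ℝ} {z : E}

/-- The Łojasiewicz gradient inequality `|u - u z| ^ θ ≤ C ‖∇u‖` near `z`, for an exponent
`θ = m / (m + 1)`. Raising it to the power `m + 1` leaves only natural exponents. The case `m = 0`
says that the derivative is bounded away from zero near `z`. -/
def LojasiewiczAt (u : E → ℝ) (z : E) : Prop :=
  ∃ m : ℕ, (fun y => (u y - u z) ^ m) =O[𝓝 z] fun y => ‖fderiv ℝ u y‖ ^ (m + 1)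

lemma LojasiewiczAt.of_isBigO {n : ℕ} (hu : (fun y => u (z + y) - u z) =O[𝓝 0] (‖·‖ ^ (n + 1)))
    (hdu : (‖·‖ ^ n) =O[𝓝 0] fun y => fderiv ℝ u (z + y)) : LojasiewiczAt u z := by
  refine ⟨n, ?_⟩
  rw [← map_add_left_nhds_zero, isBigO_map]
  refine (hu.pow n).trans ?_
  simp only [pow_right_comm]
  exact hdu.norm_right.pow (n + 1)

lemma LojasiewiczAt.of_fderiv_ne_zero (hu : ContinuousAt (fderiv ℝ u) z)
    (hz : fderiv ℝ u z ≠ 0) : LojasiewiczAt u z := by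
  have hpos : 0 < ‖fderiv ℝ u z‖ := norm_pos_iff.2 hz
  have hbound : ∃ b > 0, ∀ᶠ y in 𝓝 z, b ≤ ‖fderiv ℝ u y‖ :=
    ⟨_, half_pos hpos, hu.norm.eventually (eventually_ge_nhds (half_lt_self hpos))⟩
  exact ⟨0, by simpa using (isBigO_const_left_iff_pos_le_norm (one_ne_zero' ℝ)).2 hbound⟩

lemma LojasiewiczAt.of_eventuallyEq_const (h : ∀ᶠ y in 𝓝 z, u y = u z) : LojasiewiczAt u z :=
  ⟨1, IsBigO.of_bound 0 (h.mono fun y hy => by simp [hy])⟩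

lemma LojasiewiczAt.of_comp_add {E' : Type*} [NormedAddCommGroup E'] [NormedSpace ℝ E']
    (e : E' ≃L[ℝ] E) (h : LojasiewiczAt (fun y => u (z + e y)) 0) : LojasiewiczAt u z := by
  obtain ⟨m, hm⟩ := h
  refine ⟨m, ?_⟩
  have hmap : map (fun y => z + e y) (𝓝 0) = 𝓝 z := by
    convert! (e.toHomeomorph.trans (Homeomorph.addLeft z)).map_nhds_eq 0
    simp
  have hfderiv (y : E') :
      fderiv ℝ (fun y => u (z + e y)) y = (fderiv ℝ u (z + e y)).comp (e : E' →L[ℝ] E) := by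
    rw [← fderiv_comp_add_left]
    exact e.comp_right_fderiv (f := fun x => u (z + x))
  have hle : (fun y => fderiv ℝ (fun y => u (z + e y)) y) =O[𝓝 0]
      fun y => fderiv ℝ u (z + e y) :=
    .of_bound ‖(e : E' →L[ℝ] E)‖ (.of_forall fun y => by
      rw [hfderiv, mul_comm]
      exact ContinuousLinearMap.opNorm_comp_le _ _)
  rw [← hmap, isBigO_map]
  simpa using! hm.trans (hle.norm_left.norm_right.pow (m + 1))

lemma LojasiewiczAt.of_leading_part [ProperSpace E] [Nontrivial E] (hu : AnalyticAt ℝ u z) {n : ℕ}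
    {q : E [×(n + 1)]→L[ℝ] ℝ}
    (hlead : (fun y => u (z + y) - u z - q fun _ => y) =O[𝓝 0] fun y => ‖y‖ ^ (n + 2))
    (hne : ∀ y, y ≠ 0 → fderiv ℝ (fun y => q fun _ => y) y ≠ 0) : LojasiewiczAt u z := by
  set P : E → ℝ := fun y => q fun _ => y
  have hP (y : E) : AnalyticAt ℝ P y := analyticAt_apply_diag q y
  have hPc : ContDiff ℝ 1 P := contDiff_iff_contDiffAt.2 fun y => (hP y).contDiffAt
  obtain ⟨c, hc, hle⟩ := exists_pos_forall_mul_norm_pow_le_of_homogeneous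
    (hPc.continuous_fderiv one_ne_zero) (fderiv_smul_of_homogeneous hPc (apply_diag_smul q)) hne
  have hpow : (‖·‖ ^ n) =O[𝓝 0] fderiv ℝ P := by
    refine .of_bound c⁻¹ (.of_forall fun y => ?_)
    rw [norm_pow, norm_norm, le_inv_mul_iff₀ hc]
    exact hle y
  have hrem : (fun y => fderiv ℝ u (z + y) - fderiv ℝ P y) =o[𝓝 0] fderiv ℝ P := by
    have hf : AnalyticAt ℝ (fun y => u (z + y) - u z) 0 :=
      (AnalyticAt.fun_comp (by simpa using hu) (analyticAt_const.add analyticAt_id)).fun_sub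
        analyticAt_const
    have hO := isBigO_pow_fderiv (x := 0) (hf.sub (hP 0)) (n := n + 1) (by simpa using! hlead)
    refine (IsBigO.congr' hO ?_ .rfl).trans_isLittleO
      ((isLittleO_norm_pow_norm_pow n.lt_succ_self).trans_isBigO hpow)
    filter_upwards [hf.eventually_analyticAt] with y hy
    rw [zero_add, fderiv_sub hy.differentiableAt (hP y).differentiableAt, fderiv_sub_const,
      fderiv_comp_add_left]
  refine .of_isBigO (n := n) ?_ (hpow.trans ?_)
  · simpa using! (hlead.trans (isBigO_norm_pow_norm_pow n.succ.le_succ)).add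
      (isBigO_pow_apply_diag q)
  · simpa using hrem.right_isBigO_add

end Lojasiewicz

lemma fderiv_apply_diag_real_ne_zero {n : ℕ} {q : ℝ [×(n + 1)]→L[ℝ] ℝ}
    (hq : ∃ y, q (fun _ => y) ≠ 0) {y : ℝ} (hy : y ≠ 0) :
    fderiv ℝ (fun y => q fun _ => y) y ≠ 0 := by
  have hpow : (fun y : ℝ => q fun _ => y) = fun y => y ^ (n + 1) * q fun _ => 1 := by
    ext y
    simpa using apply_diag_smul q y 1
  have hq1 : (q fun _ => 1) ≠ 0 := by
    obtain ⟨y, hy⟩ := hq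
    rw [congrFun hpow y] at hy
    exact right_ne_zero_of_mul hy
  have hderiv : deriv (fun y : ℝ => q fun _ => y) y = (n + 1) * y ^ n * q fun _ => 1 := by
    simp [hpow]
  intro h
  have hne : (n + 1) * y ^ n * (q fun _ => 1) ≠ 0 := by positivity
  exact hne (by rw [← hderiv, ← fderiv_apply_one_eq_deriv, h]; simp)

lemma LojasiewiczAt.of_analyticAt_real {h : ℝ → ℝ} {a : ℝ} (hh : AnalyticAt ℝ h a) :
    LojasiewiczAt h a := by
  by_cases hc : ∀ᶠ y in 𝓝 a, h y = h a
  · exact .of_eventuallyEq_const hc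
  have hO : (fun y => h (a + y) - h a) =O[𝓝 0] fun y => ‖y‖ ^ 1 := by
    have h0 := hh.differentiableAt.isBigO_sub
    rw [← map_add_left_nhds_zero, isBigO_map] at h0
    simpa [Function.comp_def] using h0.norm_right
  obtain ⟨n, q, hq, hlead⟩ :=
    exists_leading_part (hh.fun_sub analyticAt_const) (by simpa [sub_eq_zero] using hc) hO
  exact .of_leading_part hh hlead fun y => fderiv_apply_diag_real_ne_zero hq

section Plane

lemma fderiv_eqOn_zero_of_harmonicOnNhd {f : ℂ → ℝ} {U : Set ℂ} (hf : HarmonicOnNhd f U)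
    (hU : IsPreconnected U) {x : ℂ} (hx : x ∈ U) (hfreq : ∃ᶠ y in 𝓝[≠] x, fderiv ℝ f y = 0) :
    EqOn (fderiv ℝ f) 0 U := by
  have hg : EqOn (fun y => (fderiv ℝ f y 1 : ℂ) - Complex.I * fderiv ℝ f y Complex.I) 0 U :=
    AnalyticOnNhd.eqOn_zero_of_preconnected_of_frequently_eq_zero
      (fun y hy => HarmonicAt.analyticAt_complex_partial (hf y hy)) hU hx
      (hfreq.mono fun y hy => by simp [hy])
  intro y hy
  have h := hg hy
  simp only [Pi.zero_apply, Complex.ext_iff, Complex.sub_re, Complex.sub_im, Complex.ofReal_re,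
    Complex.ofReal_im, Complex.I_mul_re, Complex.I_mul_im, Complex.zero_re, Complex.zero_im,
    neg_zero, sub_zero, zero_sub, neg_eq_zero] at h
  ext v
  have hv : v = v.re • (1 : ℂ) + v.im • Complex.I := by simp
  rw [hv, map_add, map_smul, map_smul, h.1, h.2]
  simp

lemma fderiv_ne_zero_of_homogeneous_of_harmonic {P : ℂ → ℝ} (hP : HarmonicOnNhd P univ) {n : ℕ}
    (hhom : ∀ (t : ℝ) y, P (t • y) = t ^ (n + 1) • P y) (hne : ∃ y, P y ≠ 0) {y : ℂ} (hy : y ≠ 0) :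
    fderiv ℝ P y ≠ 0 := by
  have hPc : ContDiff ℝ 2 P := contDiffOn_univ.1 hP.contDiffOn
  intro h0
  have hray : Tendsto (fun s : ℝ => s • y) (𝓝[≠] 1) (𝓝[≠] y) := by
    have hcont : Tendsto (fun s : ℝ => s • y) (𝓝 1) (𝓝 y) :=
      Continuous.tendsto' (by fun_prop) _ _ (one_smul ℝ y)
    refine tendsto_nhdsWithin_iff.2 ⟨hcont.mono_left nhdsWithin_le_nhds, ?_⟩
    filter_upwards [self_mem_nhdsWithin] with s hs h
    exact hs (smul_left_injective ℝ hy (h.trans (one_smul ℝ y).symm))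
  have hfreq : ∃ᶠ w in 𝓝[≠] y, fderiv ℝ P w = 0 := hray.frequently (.of_forall fun s => by
    rw [fderiv_smul_of_homogeneous (hPc.of_le one_le_two) hhom, h0, smul_zero])
  have hzero : ∀ w, fderiv ℝ P w = 0 := fun w =>
    fderiv_eqOn_zero_of_harmonicOnNhd hP isPreconnected_univ (mem_univ y) hfreq (mem_univ w)
  obtain ⟨w, hw⟩ := hne
  refine hw ?_
  rw [is_const_of_fderiv_eq_zero (hPc.differentiable two_ne_zero) hzero w ((0 : ℝ) • w), hhom]
  simp

end Plane

section Taylor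

variable {E F : Type*} [NormedAddCommGroup E] [NormedSpace ℝ E] [NormedAddCommGroup F]
  [NormedSpace ℝ F]

lemma isBigO_sub_sub_fderiv_of_contDiffAt {f : E → F} {x : E} (hf : ContDiffAt ℝ 2 f x) :
    (fun p : E × E => f p.1 - f p.2 - fderiv ℝ f p.2 (p.1 - p.2)) =O[𝓝 (x, x)]
      fun p => ‖p.1 - p.2‖ ^ 2 := by
  obtain ⟨K, s, hs, hK⟩ :=
    (hf.fderiv_right (m := 1) (by norm_num)).exists_lipschitzOnWith
  have hdiff : ∀ᶠ y in 𝓝 x, DifferentiableAt ℝ f y :=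
    (hf.eventually (by simp)).mono fun y hy => hy.differentiableAt two_ne_zero
  obtain ⟨r, hr, hball⟩ := eventually_nhds_iff_ball.1 (hdiff.and hs)
  refine .of_bound K ?_
  rw [nhds_prod_eq]
  filter_upwards [prod_mem_prod (ball_mem_nhds x hr) (ball_mem_nhds x hr)] with ⟨y, w⟩ ⟨hy, hw⟩
  have hseg : segment ℝ w y ⊆ ball x r := (convex_ball x r).segment_subset hw hy
  rw [norm_pow, norm_norm, sq, ← mul_assoc]
  refine (convex_segment w y).norm_image_sub_le_of_norm_fderiv_le'
    (fun v hv => (hball v (hseg hv)).1) (fun v hv => ?_) (left_mem_segment ℝ w y)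
    (right_mem_segment ℝ w y)
  refine (hK.norm_sub_le (hball v (hseg hv)).2 (hball w hw).2).trans ?_
  gcongr
  exact norm_sub_le_of_mem_segment hv

lemma isBigO_sq_of_fderiv_eq_zero {f : E → F} {x : E} (hf : ContDiffAt ℝ 2 f x)
    (hx : fderiv ℝ f x = 0) : (fun y => f (x + y) - f x) =O[𝓝 0] fun y => ‖y‖ ^ 2 := by
  have htendsto : Tendsto (fun y => (x + y, x)) (𝓝 0) (𝓝 (x, x)) :=
    Continuous.tendsto' (by fun_prop) _ _ (by simp)
  simpa [Function.comp_def, hx] using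
    (isBigO_sub_sub_fderiv_of_contDiffAt hf).comp_tendsto htendsto

end Taylor

section SmallLaplacian

lemma LojasiewiczAt.of_isBigO_laplacian_complex {v : ℂ → ℝ} (hv : AnalyticAt ℝ v 0)
    (hcrit : fderiv ℝ v 0 = 0) (hΔ : Δ v =O[𝓝 0] fun y => v y - v 0) : LojasiewiczAt v 0 := by
  by_cases hc : ∀ᶠ y in 𝓝 0, v y = v 0
  · exact .of_eventuallyEq_const hc
  have hsq := isBigO_sq_of_fderiv_eq_zero hv.contDiffAt hcrit
  obtain ⟨n, q, hq, hlead⟩ :=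
    exists_leading_part (hv.fun_sub analyticAt_const) (by simpa [sub_eq_zero] using hc) hsq
  simp only [zero_add] at hlead
  have hO : (fun y => v y - v 0) =O[𝓝 0] fun y => ‖y‖ ^ (n + 2) := by
    simpa using! (hlead.trans (isBigO_norm_pow_norm_pow (n + 2).le_succ)).add
      (isBigO_pow_apply_diag q)
  have hΔ' : Δ (fun y => v y - v 0) =O[𝓝 0] fun y => ‖y‖ ^ (n + 1) := by
    have hconst : Δ (fun y => v y - v 0) =ᶠ[𝓝 0] Δ v := by
      filter_upwards [hv.contDiffAt.laplacian_sub_nhds contDiffAt_const] with y hy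
      simpa using! hy
    exact hconst.trans_isBigO
      ((hΔ.trans hO).trans (isBigO_norm_pow_norm_pow (n + 1).le_succ))
  have hharm : HarmonicOnNhd (fun y => q fun _ => y) univ := fun y _ =>
    ⟨(analyticAt_apply_diag q y).contDiffAt, .of_forall
      (laplacian_leading_part_eq_zero (hv.fun_sub analyticAt_const) q hlead hΔ')⟩
  refine .of_leading_part hv (by simpa using hlead) fun y =>
    fderiv_ne_zero_of_homogeneous_of_harmonic hharm (apply_diag_smul q) hq

variable {E : Type*} [NormedAddCommGroup E] [InnerProductSpace ℝ E] [FiniteDimensional ℝ E]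

lemma LojasiewiczAt.of_isBigO_laplacian (hE : Module.finrank ℝ E = 2) {u : E → ℝ} {z : E}
    (hu : AnalyticAt ℝ u z) (hcrit : fderiv ℝ u z = 0) (hΔ : Δ u =O[𝓝 z] fun y => u y - u z) :
    LojasiewiczAt u z := by
  let e : ℂ ≃ₗᵢ[ℝ] E := Complex.isometryOfOrthonormal ((stdOrthonormalBasis ℝ E).reindex
    (finCongr hE))
  have hz : z + e 0 = z := by simp
  have htendsto : Tendsto (fun y => z + e y) (𝓝 0) (𝓝 z) :=
    Continuous.tendsto' (by fun_prop) _ _ hz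
  have hfderiv : fderiv ℝ (fun y => u (z + e y)) 0 = 0 := by
    rw [← hz] at hu hcrit
    exact (HasFDerivAt.comp 0 (hcrit ▸ hu.differentiableAt.hasFDerivAt)
      (e.toContinuousLinearEquiv.hasFDerivAt.const_add z)).fderiv.trans
      (ContinuousLinearMap.zero_comp _)
  refine .of_comp_add e.toContinuousLinearEquiv (.of_isBigO_laplacian_complex ?_ hfderiv ?_)
  · exact AnalyticAt.fun_comp (by simpa using hu)
      (analyticAt_const.add (e.toContinuousLinearEquiv.analyticAt 0))
  · simpa [laplacian_comp_add_isometry, Function.comp_def] using! hΔ.comp_tendsto htendsto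

end SmallLaplacian

lemma isBigO_add_pow {α 𝕜 G : Type*} [NormedField 𝕜] [Norm G] {a b : α → 𝕜} {g : α → G}
    {l : Filter α} {m : ℕ} (ha : (fun x => a x ^ m) =O[l] g) (hb : (fun x => b x ^ m) =O[l] g) :
    (fun x => (a x + b x) ^ m) =O[l] g := by
  refine (IsBigO.of_bound (2 ^ (m - 1)) (.of_forall fun x => ?_)).trans
    (ha.norm_left.add hb.norm_left)
  calc ‖(a x + b x) ^ m‖ ≤ (‖a x‖ + ‖b x‖) ^ m := by
        rw [norm_pow]
        gcongr
        exact norm_add_le _ _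
    _ ≤ 2 ^ (m - 1) * (‖a x‖ ^ m + ‖b x‖ ^ m) := add_pow_le (norm_nonneg _) (norm_nonneg _) m
    _ = 2 ^ (m - 1) * ‖‖a x ^ m‖ + ‖b x ^ m‖‖ := by
        rw [← norm_pow, ← norm_pow, Real.norm_of_nonneg (by positivity)]

section LyapunovSchmidt

variable {E : Type*} [NormedAddCommGroup E] [NormedSpace ℝ E] {u : E → ℝ} {z : E}

lemma isBigO_sq_fderiv_of_isBigO_sub (hu : ContDiffAt ℝ 2 u z) {r : E → E}
    (hr : Tendsto r (𝓝 z) (𝓝 z)) (hle : (fun w => r w - w) =O[𝓝 z] fderiv ℝ u) :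
    (fun w => u (r w) - u w) =O[𝓝 z] fun w => ‖fderiv ℝ u w‖ ^ 2 := by
  have htaylor := (isBigO_sub_sub_fderiv_of_contDiffAt hu).comp_tendsto (hr.prodMk_nhds tendsto_id)
  have hlin : (fun w => fderiv ℝ u w (r w - w)) =O[𝓝 z] fun w => ‖fderiv ℝ u w‖ ^ 2 := by
    refine (IsBigO.of_norm_le fun w => (fderiv ℝ u w).le_opNorm (r w - w)).trans ?_
    simp only [sq]
    exact (isBigO_refl _ _).mul hle.norm_norm
  simpa [Function.comp_def] using (htaylor.trans (hle.norm_norm.pow 2)).add hlin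

lemma isBigO_fderiv_comp_of_isBigO_sub (hu : ContDiffAt ℝ 2 u z) {s : E → ℝ} {c : ℝ → E}
    (hs : ContinuousAt s z) (hc : ContDiffAt ℝ 1 c (s z)) (hcz : c (s z) = z)
    (hle : (fun w => c (s w) - w) =O[𝓝 z] fderiv ℝ u) :
    (fun w => fderiv ℝ (u ∘ c) (s w)) =O[𝓝 z] fderiv ℝ u := by
  obtain ⟨K, N, hN, hK⟩ := (hu.fderiv_right (m := 1) (by norm_num)).exists_lipschitzOnWith
  have hcs : Tendsto (fun w => c (s w)) (𝓝 z) (𝓝 z) := by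
    simpa [Function.comp_def, hcz] using hc.continuousAt.tendsto.comp hs
  have hDu : (fun w => fderiv ℝ u (c (s w)) - fderiv ℝ u w) =O[𝓝 z] fderiv ℝ u := by
    refine (IsBigO.of_bound K ?_).trans hle
    filter_upwards [hcs hN, hN] with w hcw hw using hK.norm_sub_le hcw hw
  have hDc : (fun w => fderiv ℝ c (s w)) =O[𝓝 z] fun _ => (1 : ℝ) :=
    ((hc.fderiv_right (m := 0) (by norm_num)).continuousAt.comp hs).isBigO_one ℝ
  have hchain : ∀ᶠ w in 𝓝 z,
      ‖fderiv ℝ (u ∘ c) (s w)‖ ≤ ‖fderiv ℝ u (c (s w))‖ * ‖fderiv ℝ c (s w)‖ := by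
    filter_upwards [hcs.eventually (hu.eventually (by simp)),
      hs.eventually (hc.eventually (by simp))] with w hw hcw
    rw [fderiv_comp _ (hw.differentiableAt two_ne_zero) (hcw.differentiableAt one_ne_zero)]
    exact ContinuousLinearMap.opNorm_comp_le _ _
  have hDuc : (fun w => fderiv ℝ u (c (s w))) =O[𝓝 z] fderiv ℝ u := by
    simpa using hDu.add (isBigO_refl (fderiv ℝ u) _)
  simpa using (IsBigO.of_norm_eventuallyLE hchain).trans (hDuc.norm_norm.mul hDc.norm_left)

/- Moving from `w` to the curve `c` changes `u` by `O(‖∇u‖ ^ 2)`, which is harmless for every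
exponent. -/
lemma LojasiewiczAt.of_comp_curve (hu : ContDiffAt ℝ 2 u z) {s : E → ℝ} {c : ℝ → E}
    (hs : ContinuousAt s z) (hc : ContDiffAt ℝ 1 c (s z)) (hcz : c (s z) = z)
    (hle : (fun w => c (s w) - w) =O[𝓝 z] fderiv ℝ u) (h : LojasiewiczAt (u ∘ c) (s z)) :
    LojasiewiczAt u z := by
  obtain ⟨m, hm⟩ := h
  have hcurve : (fun w => (u (c (s w)) - u z) ^ m) =O[𝓝 z] fun w => ‖fderiv ℝ u w‖ ^ (m + 1) := by
    have h := (hm.comp_tendsto hs).trans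
      ((isBigO_fderiv_comp_of_isBigO_sub hu hs hc hcz hle).norm_norm.pow (m + 1))
    simpa [Function.comp_def, hcz] using h
  refine ⟨m, ?_⟩
  rcases m.eq_zero_or_pos with rfl | hmpos
  · simpa using hcurve
  have hbdd : fderiv ℝ u =O[𝓝 z] fun _ => (1 : ℝ) :=
    (hu.fderiv_right (m := 1) (by norm_num)).continuousAt.isBigO_one ℝ
  have hcs : Tendsto (fun w => c (s w)) (𝓝 z) (𝓝 z) := by
    simpa [Function.comp_def, hcz] using hc.continuousAt.tendsto.comp hs
  have hoff : (fun w => (u w - u (c (s w))) ^ m) =O[𝓝 z] fun w => ‖fderiv ℝ u w‖ ^ (m + 1) := by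
    refine ((isBigO_sq_fderiv_of_isBigO_sub hu hcs hle).symm.pow m).trans ?_
    obtain ⟨k, rfl⟩ := Nat.exists_eq_add_of_le' hmpos
    have hpow (w : E) : (‖fderiv ℝ u w‖ ^ 2) ^ (k + 1) =
      ‖fderiv ℝ u w‖ ^ k * ‖fderiv ℝ u w‖ ^ (k + 1 + 1) := by ring
    simp only [hpow]
    simpa using (hbdd.norm_left.pow k).mul (isBigO_refl (fun w => ‖fderiv ℝ u w‖ ^ (k + 1 + 1)) _)
  simpa using isBigO_add_pow hoff hcurve

end LyapunovSchmidt

section InverseFunction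

variable {E F X : Type*} [NormedAddCommGroup E] [NormedSpace ℝ E] [CompleteSpace E]
  [NormedAddCommGroup F] [NormedSpace ℝ F] [NormedAddCommGroup X] [NormedSpace ℝ X]

lemma exists_analyticAt_leftInverse_of_hasFDerivAt_id {Φ : E → E} {z : E} (hΦ : AnalyticAt ℝ Φ z)
    (hΦz : HasFDerivAt Φ (.id ℝ E) z) :
    ∃ Ψ : E → E, AnalyticAt ℝ Ψ (Φ z) ∧ ∀ᶠ w in 𝓝 z, Ψ (Φ w) = w := by
  have hΦz' : HasFDerivAt Φ ((ContinuousLinearEquiv.refl ℝ E : E ≃L[ℝ] E) : E →L[ℝ] E) z := hΦz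
  have hω : ContDiffAt ℝ ω Φ z := hΦ.contDiffAt
  have hstrict := hω.hasStrictFDerivAt' hΦz' (by simp)
  exact ⟨hω.localInverse hΦz' (by simp), (hω.to_localInverse hΦz' (by simp)).analyticAt,
    hstrict.eventually_left_inverse⟩

lemma exists_analyticAt_near_zeros {G : E → F} {z : E} (hG : AnalyticAt ℝ G z) (hGz : G z = 0)
    {ℓ : E →L[ℝ] X} {B : X × F →L[ℝ] E} (hB : B ∘L ℓ.prod (fderiv ℝ G z) = .id ℝ E) :
    ∃ c : X → E, AnalyticAt ℝ c (ℓ z) ∧ c (ℓ z) = z ∧ (fun w => c (ℓ w) - w) =O[𝓝 z] G := by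
  let Φ : E → E := fun w => B (ℓ w, G w)
  have hΦ : AnalyticAt ℝ Φ z := (B.analyticAt _).comp ((ℓ.analyticAt z).prod hG)
  have hΦz : HasFDerivAt Φ (.id ℝ E) z := by
    rw [← hB]
    exact B.hasFDerivAt.comp z (ℓ.hasFDerivAt.prodMk hG.differentiableAt.hasFDerivAt)
  obtain ⟨Ψ, hΨ, hleft⟩ := exists_analyticAt_leftInverse_of_hasFDerivAt_id hΦ hΦz
  have hΦc : Φ z = B (ℓ z, 0) := by simp [Φ, hGz]
  rw [hΦc] at hΨ
  refine ⟨fun x => Ψ (B (x, 0)), ?_, ?_, ?_⟩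
  · exact AnalyticAt.fun_comp hΨ ((B ∘L .inl ℝ X F).analyticAt (ℓ z))
  · simpa [hΦc] using hleft.self_of_nhds
  obtain ⟨K, N, hN, hK⟩ := (hΨ.contDiffAt (n := 1)).exists_lipschitzOnWith
  have hΦN : ∀ᶠ w in 𝓝 z, Φ w ∈ N := hΦ.continuousAt.eventually (hΦc ▸ hN)
  have hcN : ∀ᶠ w in 𝓝 z, B (ℓ w, 0) ∈ N :=
    (Continuous.continuousAt (by fun_prop)).eventually hN
  have hstep (w : E) : B (ℓ w, 0) - Φ w = B (0, -G w) := by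
    rw [← map_sub]
    simp
  refine (IsBigO.of_bound K ?_).trans (B.isBigO_comp (fun w => ((0 : X), -G w)) _ |>.trans ?_)
  · filter_upwards [hleft, hΦN, hcN] with w hw hwN hwcN
    rw [← hstep]
    nth_rw 2 [← hw]
    exact hK.norm_sub_le hwcN hwN
  · exact .of_bound 1 (.of_forall fun w => by simp [Prod.norm_def])

end InverseFunction

section Corank

variable {E : Type*} [NormedAddCommGroup E] [NormedSpace ℝ E] [FiniteDimensional ℝ E]

lemma exists_leftInverse_prod_of_finrank_ker_le_one {F : Type*} [NormedAddCommGroup F]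
    [NormedSpace ℝ F] [FiniteDimensional ℝ F] (T : E →L[ℝ] F)
    (hT : Module.finrank ℝ T.ker ≤ 1) :
    ∃ (ℓ : E →L[ℝ] ℝ) (B : ℝ × F →L[ℝ] E), B ∘L ℓ.prod T = .id ℝ E := by
  obtain ⟨v, hv⟩ := finrank_le_one_iff.1 hT
  obtain ⟨ℓ, -, hℓv⟩ := exists_dual_vector'' ℝ (v : E)
  have hinj : LinearMap.ker (ℓ.prod T : E →ₗ[ℝ] ℝ × F) = ⊥ := by
    refine LinearMap.ker_eq_bot'.2 fun w hw => ?_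
    have hw' : ℓ w = 0 ∧ T w = 0 := by simpa using hw
    obtain ⟨a, ha⟩ := hv ⟨w, hw'.2⟩
    have hav : w = a • (v : E) := congrArg Subtype.val ha.symm
    have : a = 0 ∨ (v : E) = 0 := by simpa [hav, hℓv] using hw'.1
    rcases this with rfl | h0
    · simp [hav]
    · simp [hav, h0]
  obtain ⟨g, hg⟩ := LinearMap.exists_leftInverse_of_injective _ hinj
  exact ⟨ℓ, LinearMap.toContinuousLinearMap g, by ext w; exact LinearMap.congr_fun hg w⟩

lemma LojasiewiczAt.of_finrank_ker_le_one {u : E → ℝ} {z : E} (hu : AnalyticAt ℝ u z)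
    (hcrit : fderiv ℝ u z = 0)
    (hker : Module.finrank ℝ (fderiv ℝ (fderiv ℝ u) z).ker ≤ 1) : LojasiewiczAt u z := by
  obtain ⟨ℓ, B, hB⟩ := exists_leftInverse_prod_of_finrank_ker_le_one _ hker
  have := FiniteDimensional.complete ℝ E
  obtain ⟨c, hc, hcz, hle⟩ := exists_analyticAt_near_zeros hu.fderiv hcrit hB
  exact .of_comp_curve hu.contDiffAt ℓ.continuous.continuousAt hc.contDiffAt hcz hle
    (.of_analyticAt_real (AnalyticAt.comp (by rwa [hcz]) hc))

end Corank

section Semilinear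

variable {E : Type*} [NormedAddCommGroup E] [InnerProductSpace ℝ E] [FiniteDimensional ℝ E]
  {u : E → ℝ} {z : E}

lemma fderiv_fderiv_ne_zero_of_laplacian_ne_zero (h : Δ u z ≠ 0) :
    fderiv ℝ (fderiv ℝ u) z ≠ 0 := by
  contrapose! h
  simp [laplacian_eq_iteratedFDeriv_stdOrthonormalBasis, iteratedFDeriv_two_apply, h]

lemma LojasiewiczAt.of_laplacian_ne_zero (hE : Module.finrank ℝ E = 2) (hu : AnalyticAt ℝ u z)
    (hcrit : fderiv ℝ u z = 0) (hΔ : Δ u z ≠ 0) : LojasiewiczAt u z := by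
  refine .of_finrank_ker_le_one hu hcrit ?_
  have hlt : Module.finrank ℝ (fderiv ℝ (fderiv ℝ u) z).ker < Module.finrank ℝ E :=
    Submodule.finrank_lt fun htop => fderiv_fderiv_ne_zero_of_laplacian_ne_zero hΔ
      (ContinuousLinearMap.coe_injective (LinearMap.ker_eq_top.1 htop))
  lia

lemma LojasiewiczAt.of_semilinear (hE : Module.finrank ℝ E = 2) (hu : AnalyticAt ℝ u z)
    {f : ℝ → ℝ} (hf : LocallyLipschitz f) (heq : ∀ᶠ y in 𝓝 z, Δ u y = f (u y)) :
    LojasiewiczAt u z := by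
  by_cases hcrit : fderiv ℝ u z = 0
  swap
  · exact .of_fderiv_ne_zero hu.fderiv.continuousAt hcrit
  by_cases hfz : f (u z) = 0
  · refine .of_isBigO_laplacian hE hu hcrit ?_
    obtain ⟨K, s, hs, hK⟩ := hf (u z)
    refine .of_bound K ?_
    filter_upwards [heq, hu.continuousAt hs] with y hy hys
    simpa [hy, hfz] using hK.norm_sub_le hys (mem_of_mem_nhds hs)
  · exact .of_laplacian_ne_zero hE hu hcrit (by rwa [heq.self_of_nhds])

end Semilinear

section Antitone

variable {α β : Type*} [LinearOrder α] [LinearOrder β] [TopologicalSpace β]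
  [OrderTopology β] {s : α → β} {a : α} {l : β}

lemma le_of_antitoneOn_of_mapClusterPt (hs : AntitoneOn s (Ici a)) (hl : MapClusterPt l atTop s)
    {t : α} (ht : t ∈ Ici a) : l ≤ s t := by
  by_contra! hlt
  obtain ⟨t', hst', htt'⟩ :=
    ((hl.frequently (lt_mem_nhds hlt)).and_eventually (eventually_ge_atTop t)).exists
  exact hst'.not_ge (hs ht (ht.trans htt') htt')

lemma tendsto_of_antitoneOn_of_mapClusterPt (hs : AntitoneOn s (Ici a))
    (hl : MapClusterPt l atTop s) : Tendsto s atTop (𝓝 l) := by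
  refine tendsto_order.2 ⟨fun b hb => ?_, fun b hb => ?_⟩
  · filter_upwards [eventually_ge_atTop a] with t ht
    exact hb.trans_le (le_of_antitoneOn_of_mapClusterPt hs hl ht)
  · obtain ⟨t, htb, hat⟩ :=
      ((hl.frequently (gt_mem_nhds hb)).and_eventually (eventually_ge_atTop a)).exists
    filter_upwards [eventually_ge_atTop t] with t' ht'
    exact (hs hat (hat.trans ht') ht').trans_lt htb

end Antitone

section Trapping

variable {X : Type*} [PseudoMetricSpace X] {γ : ℝ → X} {φ : ℝ → ℝ} {T : ℝ} {z : X}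

lemma mem_ball_of_dist_le_sub {r : ℝ} (hγ : ContinuousOn γ (Ici T)) (hφ : ∀ t ∈ Ici T, 0 ≤ φ t)
    (hlen : ∀ b ∈ Ici T, (∀ t ∈ Ico T b, γ t ∈ ball z r) → dist (γ b) (γ T) ≤ φ T - φ b)
    (hr : dist (γ T) z + φ T < r) {t : ℝ} (ht : t ∈ Ici T) : γ t ∈ ball z r := by
  by_contra hout
  let S := Ici T ∩ γ ⁻¹' (ball z r)ᶜ
  have hS : IsClosed S :=
    hγ.preimage_isClosed_of_isClosed isClosed_Ici isOpen_ball.isClosed_compl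
  have hSb : BddBelow S := ⟨T, fun t ht => ht.1⟩
  obtain ⟨hTb, hb⟩ := hS.csInf_mem ⟨t, ht, hout⟩ hSb
  set b := sInf S
  have hin : ∀ t ∈ Ico T b, γ t ∈ ball z r := fun t ht => by
    by_contra hnot
    exact ht.2.not_ge (csInf_le hSb ⟨ht.1, hnot⟩)
  refine hb (mem_ball.2 ?_)
  linarith [hlen b hTb hin, hφ b hTb, dist_triangle (γ b) (γ T) z]

lemma tendsto_of_mapClusterPt_of_dist_le_sub {s : Set X} (hs : s ∈ 𝓝 z)
    (hγ : ContinuousOn γ (Ici T)) (hφ : ∀ t ∈ Ici T, 0 ≤ φ t) (hφ0 : Tendsto φ atTop (𝓝 0))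
    (hlen : ∀ a ∈ Ici T, ∀ b ∈ Ici a, (∀ t ∈ Ico a b, γ t ∈ s) → dist (γ b) (γ a) ≤ φ a - φ b)
    (hz : MapClusterPt z atTop γ) : Tendsto γ atTop (𝓝 z) := by
  obtain ⟨R, hR, hRs⟩ := Metric.mem_nhds_iff.1 hs
  refine nhds_basis_ball.tendsto_right_iff.2 fun ε hε => ?_
  have hr : 0 < min ε R := lt_min hε hR
  obtain ⟨a, hγa, hφa, ha⟩ := ((hz.frequently (ball_mem_nhds z (half_pos hr))).and_eventually
    ((hφ0.eventually (gt_mem_nhds (half_pos hr))).and (eventually_ge_atTop T))).exists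
  have hsub : Ici a ⊆ Ici T := Ici_subset_Ici.2 ha
  filter_upwards [eventually_ge_atTop a] with t ht
  refine ball_subset_ball (min_le_left ε R) (mem_ball_of_dist_le_sub (hγ.mono hsub)
    (fun t ht => hφ t (hsub ht)) (fun b hb hin => ?_) ?_ ht)
  · exact hlen a ha b hb fun t ht => hRs (ball_subset_ball (min_le_right ε R) (hin t ht))
  · linarith [mem_ball.1 hγa]

end Trapping

section Length

lemma integrableOn_Ici_of_norm_le_neg_deriv {E : Type*} [NormedAddCommGroup E] {g : ℝ → E}
    {φ φ' : ℝ → ℝ} {T l : ℝ} (hg : ContinuousOn g (Ici T))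
    (hφ : ∀ t ∈ Ioi T, HasDerivAt φ (φ' t) t) (hφl : Tendsto φ atTop (𝓝 l))
    (hle : ∀ᶠ t in atTop, ‖g t‖ ≤ -φ' t) : IntegrableOn g (Ici T) := by
  obtain ⟨b, hb⟩ := eventually_atTop.1 (hle.and (eventually_gt_atTop T))
  have hφ' : IntegrableOn φ' (Ioi b) :=
    integrableOn_Ioi_deriv_of_nonpos' (fun t ht => hφ t (hb t ht).2)
      (fun t ht => by linarith [norm_nonneg (g t), (hb t (le_of_lt ht)).1]) hφl
  have hO : g =O[atTop] φ' := IsBigO.of_bound 1 (hle.mono fun t ht => by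
    rw [one_mul]
    exact ht.trans (neg_le_abs _))
  exact (hg.locallyIntegrableOn measurableSet_Ici).integrableOn_of_isBigO_atTop hO
    ⟨Ioi b, Ioi_mem_atTop b, hφ'⟩

variable {E : Type*} [NormedAddCommGroup E] [NormedSpace ℝ E] {γ γ' : ℝ → E} {φ φ' : ℝ → ℝ}
  {T : ℝ}

lemma dist_le_sub_of_norm_deriv_le_neg_deriv {a b : ℝ} (hab : a ≤ b)
    (hγ : ∀ t ∈ Icc a b, HasDerivWithinAt γ (γ' t) (Icc a b) t)
    (hφ : ∀ t ∈ Icc a b, HasDerivWithinAt φ (φ' t) (Icc a b) t)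
    (hle : ∀ t ∈ Ico a b, ‖γ' t‖ ≤ -φ' t) : dist (γ b) (γ a) ≤ φ a - φ b := by
  have hIci {t : ℝ} (ht : t ∈ Ico a b) : Icc a b ∈ 𝓝[≥] t := Icc_mem_nhdsGE_of_mem ht
  rw [dist_eq_norm]
  refine image_norm_le_of_norm_deriv_right_le_deriv_boundary' (f := fun t => γ t - γ a)
    (B := fun t => φ a - φ t) (fun t ht => ((hγ t ht).sub_const _).continuousWithinAt)
    (fun t ht => ?_) (by simp) (fun t ht => ((hφ t ht).const_sub _).continuousWithinAt)
    (fun t ht => ?_) hle (right_mem_Icc.2 hab)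
  · exact ((hγ t (Ico_subset_Icc_self ht)).mono_of_mem_nhdsWithin (hIci ht)).sub_const _
  · exact ((hφ t (Ico_subset_Icc_self ht)).mono_of_mem_nhdsWithin (hIci ht)).const_sub _

lemma tendsto_and_integrableOn_of_norm_deriv_le_neg_deriv {z : E} {s : Set E} (hs : s ∈ 𝓝 z)
    (hγ : ∀ t ∈ Ici T, HasDerivWithinAt γ (γ' t) (Ici T) t) (hγ' : ContinuousOn γ' (Ici T))
    (hz : MapClusterPt z atTop γ) (hφ : ∀ t ∈ Ici T, HasDerivWithinAt φ (φ' t) (Ici T) t)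
    (hφnn : ∀ t ∈ Ici T, 0 ≤ φ t) (hφ0 : Tendsto φ atTop (𝓝 0))
    (hle : ∀ᶠ t in atTop, γ t ∈ s → ‖γ' t‖ ≤ -φ' t) :
    Tendsto γ atTop (𝓝 z) ∧ IntegrableOn γ' (Ici T) := by
  have htendsto : Tendsto γ atTop (𝓝 z) := by
    obtain ⟨T', hT'⟩ := eventually_atTop.1 (hle.and (eventually_ge_atTop T))
    have hTT' : Ici T' ⊆ Ici T := fun t ht => (hT' t ht).2
    refine tendsto_of_mapClusterPt_of_dist_le_sub hs
      (fun t ht => (hγ t (hTT' ht)).continuousWithinAt.mono hTT') (fun t ht => hφnn t (hTT' ht))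
      hφ0 (fun a ha b hb hin => ?_) hz
    have hsub : Icc a b ⊆ Ici T := Icc_subset_Ici_self.trans ((Ici_subset_Ici.2 ha).trans hTT')
    exact dist_le_sub_of_norm_deriv_le_neg_deriv hb
      (fun t ht => (hγ t (hsub ht)).mono hsub) (fun t ht => (hφ t (hsub ht)).mono hsub)
      fun t ht => (hT' t (le_trans ha ht.1)).1 (hin t ht)
  exact ⟨htendsto, integrableOn_Ici_of_norm_le_neg_deriv hγ'
    (fun t ht => (hφ t (Ioi_subset_Ici_self ht)).hasDerivAt (Ici_mem_nhds ht)) hφ0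
    (hle.mp ((htendsto.eventually hs).mono fun _ hts hle => hle hts))⟩

end Length

section Desingularization

lemma one_le_rpow_mul_of_pow_le_pow {m : ℕ} {x y : ℝ} (hx : 0 < x) (hy : 0 ≤ y)
    (h : x ^ m ≤ y ^ (m + 1)) : 1 ≤ x ^ (((m + 1 : ℕ) : ℝ)⁻¹ - 1) * y := by
  set ρ : ℝ := ((m + 1 : ℕ) : ℝ)⁻¹
  have hρ : (m : ℝ) * ρ = 1 - ρ := by
    simp only [ρ]
    push_cast
    field_simp
    ring
  have hroot : x ^ (1 - ρ) ≤ y := calc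
    x ^ (1 - ρ) = (x ^ m) ^ ρ := by rw [← hρ, Real.rpow_natCast_mul hx.le]
    _ ≤ (y ^ (m + 1)) ^ ρ := by gcongr
    _ = y := Real.pow_rpow_inv_natCast hy m.succ_ne_zero
  calc 1 = x ^ (ρ - 1) * x ^ (1 - ρ) := by simp [← Real.rpow_add hx]
    _ ≤ x ^ (ρ - 1) * y := by gcongr

variable {E : Type*} [NormedAddCommGroup E] [NormedSpace ℝ E] {u : E → ℝ} {z : E}

lemma LojasiewiczAt.exists_desingularization (h : LojasiewiczAt u z) :
    ∃ ψ ψ' : ℝ → ℝ, (∀ x, 0 ≤ x → 0 ≤ ψ x) ∧ Tendsto ψ (𝓝 0) (𝓝 0) ∧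
      (∀ x, 0 < x → HasDerivAt ψ (ψ' x) x) ∧
      ∀ᶠ y in 𝓝 z, u z < u y → 1 ≤ ψ' (u y - u z) * ‖fderiv ℝ u y‖ := by
  obtain ⟨m, hm⟩ := h
  obtain ⟨C, hC, hCm⟩ := hm.exists_pos
  set ρ : ℝ := ((m + 1 : ℕ) : ℝ)⁻¹
  have hρpos : 0 < ρ := by positivity
  refine ⟨fun x => ρ⁻¹ * (C * x) ^ ρ, fun x => C * (C * x) ^ (ρ - 1), fun x hx => by positivity,
    ?_, fun x hx => ?_, ?_⟩
  · refine Continuous.tendsto' ?_ _ _ (by simp [hρpos.ne'])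
    exact continuous_const.mul ((continuous_const_mul C).rpow_const fun _ => .inr hρpos.le)
  · refine ((((hasDerivAt_id x).const_mul C).rpow_const (p := ρ)
      (.inl (by positivity))).const_mul ρ⁻¹).congr_deriv ?_
    simp only [id, mul_one]
    field_simp
  · filter_upwards [hCm.bound] with y hy hlt
    have hpos : 0 < u y - u z := sub_pos.2 hlt
    rw [norm_pow, norm_pow, norm_norm, Real.norm_of_nonneg hpos.le] at hy
    have hpow : (C * (u y - u z)) ^ m ≤ (C * ‖fderiv ℝ u y‖) ^ (m + 1) := calc
      (C * (u y - u z)) ^ m = C ^ m * (u y - u z) ^ m := mul_pow ..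
      _ ≤ C ^ m * (C * ‖fderiv ℝ u y‖ ^ (m + 1)) := by gcongr
      _ = (C * ‖fderiv ℝ u y‖) ^ (m + 1) := by ring
    calc 1 ≤ _ := one_le_rpow_mul_of_pow_le_pow (by positivity) (by positivity) hpow
      _ = C * (C * (u y - u z)) ^ (ρ - 1) * ‖fderiv ℝ u y‖ := by ring

end Desingularization

section GradientDescent

variable {E : Type*} [NormedAddCommGroup E] [InnerProductSpace ℝ E] [CompleteSpace E] {u : E → ℝ}
  {γ : ℝ → E} {z : E}

lemma norm_gradient (u : E → ℝ) (y : E) : ‖gradient u y‖ = ‖fderiv ℝ u y‖ := by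
  simp [gradient]

lemma gradient_eq_zero_of_tendsto_of_integrableOn (hγ : Tendsto γ atTop (𝓝 z))
    (hu : ContDiffAt ℝ 1 u z)
    (hint : IntegrableOn (fun t => gradient u (γ t)) (Ici 0)) : gradient u z = 0 := by
  have hgrad : ContinuousAt (gradient u) z := (toDual ℝ E).symm.continuous.continuousAt.comp
    (hu.fderiv_right (m := 0) (by norm_num)).continuousAt
  refine IntegrableAtFilter.eq_zero_of_tendsto ⟨Ici 0, Ici_mem_atTop 0, hint⟩ (fun s hs => ?_)
    (hgrad.tendsto.comp hγ)
  obtain ⟨a, ha⟩ := mem_atTop_sets.1 hs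
  exact top_unique (Real.volume_Ici (a := a) ▸ measure_mono fun t ht => ha t ht)

/-- A trajectory of the gradient descent `γ' = -∇u` on the half-line `[0, ∞)`, with the one-sided
derivative at the initial time. -/
def IsGradientDescent (u : E → ℝ) (γ : ℝ → E) : Prop :=
  ∀ t ∈ Ici (0 : ℝ), HasDerivWithinAt γ (-gradient u (γ t)) (Ici 0) t

namespace IsGradientDescent

lemma hasDerivWithinAt_comp (h : IsGradientDescent u γ) {t : ℝ} (ht : t ∈ Ici 0)
    (hu : DifferentiableAt ℝ u (γ t)) :
    HasDerivWithinAt (u ∘ γ) (-‖gradient u (γ t)‖ ^ 2) (Ici 0) t := by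
  convert! hu.hasGradientAt.hasFDerivAt.comp_hasDerivWithinAt t (h t ht) using 1
  rw [map_neg, toDual_apply_apply, real_inner_self_eq_norm_sq]

lemma antitoneOn_comp (h : IsGradientDescent u γ)
    (hu : ∀ t ∈ Ici 0, DifferentiableAt ℝ u (γ t)) : AntitoneOn (u ∘ γ) (Ici 0) := by
  have hderiv : ∀ t ∈ Ici (0 : ℝ),
      HasDerivWithinAt (u ∘ γ) (-‖gradient u (γ t)‖ ^ 2) (Ici 0) t :=
    fun t ht => h.hasDerivWithinAt_comp ht (hu t ht)
  refine antitoneOn_of_hasDerivWithinAt_nonpos (convex_Ici 0)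
    (HasDerivWithinAt.continuousOn hderiv)
    (fun t ht => (hderiv t (interior_subset ht)).mono interior_subset) fun t _ => ?_
  exact neg_nonpos.2 (sq_nonneg _)

lemma gradient_eq_zero_of_comp_eq (h : IsGradientDescent u γ)
    (hu : ∀ t ∈ Ici 0, DifferentiableAt ℝ u (γ t)) {T c : ℝ} (hT : 0 ≤ T)
    (hc : ∀ t ∈ Ici T, u (γ t) = c) {t : ℝ} (ht : t ∈ Ici T) : gradient u (γ t) = 0 := by
  have ht0 : t ∈ Ici 0 := hT.trans ht
  have hsub : Ici t ⊆ Ici 0 := Ici_subset_Ici.2 ht0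
  have hconst : HasDerivWithinAt (u ∘ γ) 0 (Ici t) t :=
    (hasDerivWithinAt_const t (Ici t) c).congr
      (fun x hx => hc x (Ici_subset_Ici.2 ht hx)) (hc t ht)
  simpa using (uniqueDiffWithinAt_Ici t).eq_deriv _
    ((h.hasDerivWithinAt_comp ht0 (hu t ht0)).mono hsub) hconst

lemma continuousOn_gradient_comp (h : IsGradientDescent u γ)
    (hu : ∀ t ∈ Ici 0, ContDiffAt ℝ 1 u (γ t)) :
    ContinuousOn (fun t => gradient u (γ t)) (Ici 0) := fun t ht =>
  ((toDual ℝ E).symm.continuous.continuousAt.comp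
    ((hu t ht).fderiv_right (m := 0) (by norm_num)).continuousAt).comp_continuousWithinAt
    (h t ht).continuousWithinAt

lemma tendsto_and_integrableOn_of_lt (h : IsGradientDescent u γ)
    (hu : ∀ t ∈ Ici 0, ContDiffAt ℝ 1 u (γ t)) (hz : MapClusterPt z atTop γ)
    (hlim : Tendsto (u ∘ γ) atTop (𝓝 (u z))) (hlt : ∀ t ∈ Ici 0, u z < u (γ t))
    (hL : LojasiewiczAt u z) :
    Tendsto γ atTop (𝓝 z) ∧ IntegrableOn (fun t => gradient u (γ t)) (Ici 0) := by
  obtain ⟨ψ, ψ', hψnn, hψ0, hψ, hKL⟩ := hL.exists_desingularization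
  have hφ : ∀ t ∈ Ici (0 : ℝ), HasDerivWithinAt (fun t => ψ (u (γ t) - u z))
      (ψ' (u (γ t) - u z) * -‖gradient u (γ t)‖ ^ 2) (Ici 0) t := fun t ht =>
    (hψ _ (sub_pos.2 (hlt t ht))).comp_hasDerivWithinAt t
      ((h.hasDerivWithinAt_comp ht ((hu t ht).differentiableAt one_ne_zero)).sub_const (u z))
  have hgap : Tendsto (fun t => u (γ t) - u z) atTop (𝓝 0) := by
    simpa using hlim.sub_const (u z)
  rw [← integrableOn_fun_neg_iff]
  refine tendsto_and_integrableOn_of_norm_deriv_le_neg_deriv hKL h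
    (h.continuousOn_gradient_comp hu).neg hz hφ
    (fun t ht => hψnn _ (sub_nonneg.2 (hlt t ht).le)) (hψ0.comp hgap) ?_
  filter_upwards [eventually_ge_atTop 0] with t ht hγt
  have hone := hγt (hlt t ht)
  rw [← norm_gradient] at hone
  calc ‖-gradient u (γ t)‖ = 1 * ‖gradient u (γ t)‖ := by rw [norm_neg, one_mul]
    _ ≤ ψ' (u (γ t) - u z) * ‖gradient u (γ t)‖ * ‖gradient u (γ t)‖ := by gcongr
    _ = -(ψ' (u (γ t) - u z) * -‖gradient u (γ t)‖ ^ 2) := by ring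

lemma tendsto_and_integrableOn_of_eventually_gradient_eq_zero (h : IsGradientDescent u γ)
    (hu : ∀ t ∈ Ici 0, ContDiffAt ℝ 1 u (γ t)) (hz : MapClusterPt z atTop γ)
    (h0 : ∀ᶠ t in atTop, gradient u (γ t) = 0) :
    Tendsto γ atTop (𝓝 z) ∧ IntegrableOn (fun t => gradient u (γ t)) (Ici 0) := by
  rw [← integrableOn_fun_neg_iff]
  exact tendsto_and_integrableOn_of_norm_deriv_le_neg_deriv univ_mem h
    (h.continuousOn_gradient_comp hu).neg hz (φ := 0) (fun t _ => hasDerivWithinAt_const t _ 0)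
    (fun t _ => le_rfl) tendsto_const_nhds (h0.mono fun t ht _ => by simp [ht])

/- Once `u ∘ γ` reaches its limit value the trajectory rests; otherwise the desingularizing function
of `u` at `z` is defined along the whole trajectory. -/
lemma tendsto_and_integrableOn (h : IsGradientDescent u γ)
    (hu : ∀ t ∈ Ici 0, ContDiffAt ℝ 1 u (γ t)) (hz : MapClusterPt z atTop γ)
    (huz : ContinuousAt u z) (hL : LojasiewiczAt u z) :
    Tendsto γ atTop (𝓝 z) ∧ IntegrableOn (fun t => gradient u (γ t)) (Ici 0) := by
  have hdiff : ∀ t ∈ Ici 0, DifferentiableAt ℝ u (γ t) := fun t ht =>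
    (hu t ht).differentiableAt one_ne_zero
  have hanti := h.antitoneOn_comp hdiff
  have hcluster : MapClusterPt (u z) atTop (u ∘ γ) := hz.continuousAt_comp huz
  have hle {t : ℝ} (ht : t ∈ Ici 0) : u z ≤ u (γ t) :=
    le_of_antitoneOn_of_mapClusterPt hanti hcluster ht
  by_cases hreach : ∃ T ∈ Ici (0 : ℝ), u (γ T) = u z
  · obtain ⟨T, hT, huT⟩ := hreach
    have hsub : Ici T ⊆ Ici 0 := Ici_subset_Ici.2 hT
    have hrest : ∀ t ∈ Ici T, u (γ t) = u z := fun t ht =>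
      le_antisymm (huT ▸ hanti hT (hsub ht) ht) (hle (hsub ht))
    refine h.tendsto_and_integrableOn_of_eventually_gradient_eq_zero hu hz ?_
    filter_upwards [eventually_ge_atTop T] with t ht
    exact h.gradient_eq_zero_of_comp_eq hdiff hT hrest ht
  · push Not at hreach
    exact h.tendsto_and_integrableOn_of_lt hu hz
      (tendsto_of_antitoneOn_of_mapClusterPt hanti hcluster)
      (fun t ht => lt_of_le_of_ne (hle ht) (hreach t ht).symm) hL

end IsGradientDescent
end GradientDescent

theorem trajectory_converges_finite_length_general {E : Type*} [NormedAddCommGroup E]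
    [InnerProductSpace ℝ E] [FiniteDimensional ℝ E] (hE : Module.finrank ℝ E = 2) {K : Set E}
    (hK : IsCompact K) {u : E → ℝ} (hu : AnalyticOnNhd ℝ u K) {f : ℝ → ℝ}
    (hf : LocallyLipschitz f) (heq : ∀ᶠ y in 𝓝ˢ K, Δ u y = f (u y)) {γ : ℝ → E}
    (hγ : IsGradientDescent u γ) (hmem : ∀ t ∈ Ici (0 : ℝ), γ t ∈ K) :
    ∃ z ∈ K, gradient u z = 0 ∧ Tendsto γ atTop (𝓝 z) ∧
      IntegrableOn (fun t => ‖gradient u (γ t)‖) (Ici 0) := by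
  have hev : ∀ᶠ t in atTop, γ t ∈ K := (eventually_ge_atTop 0).mono hmem
  obtain ⟨z, hzK, hz⟩ := hK.exists_mapClusterPt_of_frequently hev.frequently
  have huz : AnalyticAt ℝ u z := hu z hzK
  have hL : LojasiewiczAt u z := .of_semilinear hE huz hf (heq.filter_mono (nhds_le_nhdsSet hzK))
  obtain ⟨hlim, hint⟩ := hγ.tendsto_and_integrableOn
    (fun t ht => (hu _ (hmem t ht)).contDiffAt) hz huz.continuousAt hL
  have hcrit : gradient u z = 0 :=
    gradient_eq_zero_of_tendsto_of_integrableOn hlim huz.contDiffAt hint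
  exact ⟨z, hzK, hcrit, hlim, hint.norm⟩

lemma lap_eq_laplacian (u : E2 → ℝ) : lap u = Δ u := by
  rw [laplacian_eq_iteratedFDeriv_orthonormalBasis u (EuclideanSpace.basisFun (Fin 2) ℝ)]
  ext z
  refine Finset.sum_congr rfl fun i _ => ?_
  congr 1
  ext j
  fin_cases j <;> simp

end

/-- A gradient-descent trajectory of the eigenfunction `u` staying in `closure Ω`
converges to a critical point of `u` and has finite length. -/
theorem trajectory_converges_finite_length
    (Ω U : Set E2) (hΩne : Ω.Nonempty) (hΩo : IsOpen Ω)
    (hΩb : Bornology.IsBounded Ω)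
    (hUo : IsOpen U) (hUconn : IsConnected U) (hsub : closure Ω ⊆ U)
    (lam : ℝ) (hlam : 0 < lam)
    (u : E2 → ℝ) (hu : AnalyticOnNhd ℝ u U)
    (hne : ∃ z ∈ U, u z ≠ 0)
    (heq : ∀ z ∈ U, lap u z + lam * u z = 0)
    (γ : ℝ → E2)
    (hderiv : ∀ t ∈ Ici (0:ℝ), HasDerivWithinAt γ (-(gradient u (γ t))) (Ici 0) t)
    (hmem : ∀ t ∈ Ici (0:ℝ), γ t ∈ closure Ω) :
    ∃ zlim ∈ closure Ω, gradient u zlim = 0 ∧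
      Tendsto γ atTop (𝓝 zlim) ∧
      IntegrableOn (fun t => ‖gradient u (γ t)‖) (Ici 0) := by
  have heqn : ∀ᶠ y in 𝓝ˢ (closure Ω), Laplacian.laplacian u y = -lam * u y := by
    filter_upwards [hUo.mem_nhdsSet.2 hsub] with y hy
    rw [← lap_eq_laplacian]
    linarith [heq y hy]
  exact trajectory_converges_finite_length_general finrank_euclideanSpace_fin hΩb.isCompact_closure
    (hu.mono hsub) (lipschitzWith_smul (-lam)).locallyLipschitz heqn hderiv hmem
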